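/- arXiv:1701.08940 — 2 statements merged into one kernel-verified Lean document; each statement's English description precedes it below -/
import Mathlib

section
/- Let τ ∈ H. For every y ∈ ℝ the function (w,z) ↦ φ*_{−1/τ}(w,z)·e(−wx+zy) is Lebesgue integrable on ℝ², and for every (x,y) ∈ ℝ² with x ≠ 0 one has φ*_τ(x,y) − τ^{−1}·∫_{ℝ²} φ*_{−1/τ}(w,z)·e(−wx+zy) dw dz = e(((y²−x²)/2)τ)·sgn(x)·erfc(√(−iπτ)·|x|), where the square root is principal and erfc is the entire extension of the complementary error function. -/
open MeasureTheory Filter Set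

noncomputable section

/-- `e(z) = exp(2πiz)` -/
def eC (z : ℂ) : ℂ := Complex.exp (2 * Real.pi * Complex.I * z)

/-- The complementary error function `erfc(x) = (2/√π)∫_x^∞ e^{-r²} dr`. -/
def erfc (x : ℝ) : ℝ := (2 / Real.sqrt Real.pi) * ∫ r in Set.Ioi x, Real.exp (-(r ^ 2))

/-- The entire extension of the complementary error function:
`erfc(z) = 1 - (2/√π)∫_0^1 z·e^{-z²t²} dt`. -/
def erfcC (z : ℂ) : ℂ :=
  1 - (2 / Real.sqrt Real.pi) * ∫ t in (0:ℝ)..1, z * Complex.exp (-(z ^ 2) * (t : ℂ) ^ 2)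

/-- Principal square root of a complex number. -/
def csqrt (z : ℂ) : ℂ := z ^ (1 / 2 : ℂ)

/-- `φ*_τ(x,y) = e(((y²-x²)/2)τ)·sgn(x)·erfc(√(2πv)|x|)`. -/
def phiStar (τ : ℂ) (x y : ℝ) : ℂ :=
  eC ((((y : ℂ) ^ 2 - (x : ℂ) ^ 2) / 2) * τ) * (Real.sign x : ℂ) *
    (erfc (Real.sqrt (2 * Real.pi * τ.im) * |x|) : ℂ)


open Topology FourierTransform ComplexConjugate

/-- primitive of the scaled gaussian -/
def PP (z : ℂ) (x : ℝ) : ℂ := ∫ r in (0:ℝ)..x, z * Complex.exp (-(z ^ 2) * (r : ℂ) ^ 2)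

lemma PP_hasDerivAt (z : ℂ) (x : ℝ) :
    HasDerivAt (PP z) (z * Complex.exp (-(z ^ 2) * (x : ℂ) ^ 2)) x := by
  have hc : Continuous (fun r : ℝ => z * Complex.exp (-(z ^ 2) * (r : ℂ) ^ 2)) := by fun_prop
  exact intervalIntegral.integral_hasDerivAt_right (hc.intervalIntegrable _ _)
    (hc.stronglyMeasurableAtFilter _ _) hc.continuousAt

lemma PP_zero (z : ℂ) : PP z 0 = 0 := by simp [PP]

lemma PP_neg (z : ℂ) (x : ℝ) : PP z (-x) = - PP z x := by
  have h := intervalIntegral.integral_comp_neg (a := 0) (b := x)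
    (fun r : ℝ => z * Complex.exp (-(z ^ 2) * (r : ℂ) ^ 2))
  simp only [Complex.ofReal_neg, neg_sq, neg_zero] at h
  unfold PP
  rw [h, intervalIntegral.integral_symm]

lemma erfcC_mul (z : ℂ) (x : ℝ) :
    erfcC (z * (x : ℂ)) = 1 - (2 / Real.sqrt Real.pi) * PP z x := by
  unfold erfcC PP
  congr 2
  have h := intervalIntegral.smul_integral_comp_mul_left (a := 0) (b := 1)
    (fun r : ℝ => z * Complex.exp (-(z ^ 2) * (r : ℂ) ^ 2)) x
  rw [mul_zero, mul_one] at h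
  rw [← h, ← intervalIntegral.integral_smul]
  congr 1
  ext t
  simp only [Complex.real_smul, Complex.ofReal_mul]
  ring_nf

lemma sign_PP (z : ℂ) (x : ℝ) : (Real.sign x : ℂ) * PP z |x| = PP z x := by
  rcases lt_trichotomy x 0 with h | h | h
  · rw [Real.sign_of_neg h, abs_of_neg h, PP_neg]; simp
  · simp [h, PP_zero]
  · rw [Real.sign_of_pos h, abs_of_pos h]; simp

lemma gint (a : ℝ) : IntegrableOn (fun r : ℝ => Real.exp (-(r ^ 2))) (Ioi a) := by
  have := (integrable_exp_neg_mul_sq (b := 1) one_pos).integrableOn (s := Ioi a)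
  simpa using this

lemma erfc_eq_interval (x : ℝ) :
    erfc x = 1 - (2 / Real.sqrt Real.pi) * ∫ r in (0:ℝ)..x, Real.exp (-(r ^ 2)) := by
  have h := intervalIntegral.integral_interval_add_Ioi (gint 0) (gint x)
  have h2 : ∫ r in Ioi (0:ℝ), Real.exp (-(r ^ 2)) = Real.sqrt Real.pi / 2 := by
    simpa using integral_gaussian_Ioi 1
  have hp : Real.sqrt Real.pi ≠ 0 := by positivity
  unfold erfc
  rw [h2] at h
  rw [eq_sub_of_add_eq' h]
  field_simp

lemma erfc_eq (c x : ℝ) :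
    (erfc (c * x) : ℂ) = 1 - (2 / Real.sqrt Real.pi) * PP c x := by
  rw [erfc_eq_interval]
  push_cast
  congr 2
  unfold PP
  have h := intervalIntegral.smul_integral_comp_mul_left (a := 0) (b := x)
    (fun r : ℝ => Real.exp (-(r ^ 2))) c
  rw [mul_zero] at h
  rw [← h, smul_eq_mul, ← intervalIntegral.integral_const_mul, ← intervalIntegral.integral_ofReal]
  congr 1
  ext t
  push_cast
  ring_nf

lemma erfc_nonneg (x : ℝ) : 0 ≤ erfc x := by
  unfold erfc
  have : 0 ≤ ∫ r in Set.Ioi x, Real.exp (-(r ^ 2)) := integral_nonneg (fun r => by positivity)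
  positivity

lemma erfc_le (x : ℝ) (hx : 0 ≤ x) : erfc x ≤ 2 * Real.exp (-x ^ 2) := by
  have hp : 0 < Real.sqrt Real.pi := by positivity
  have hi : Integrable (fun r : ℝ => Real.exp (-(r - x) ^ 2)) := by
    have := (integrable_exp_neg_mul_sq (b := 1) one_pos).comp_sub_right x
    simpa using this
  have h1 : ∫ r in Set.Ioi x, Real.exp (-(r ^ 2)) ≤
      ∫ r in Set.Ioi x, Real.exp (-x ^ 2) * Real.exp (-(r - x) ^ 2) := by
    refine setIntegral_mono_on (gint x) (hi.const_mul _).integrableOn measurableSet_Ioi ?_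
    intro r hr
    rw [← Real.exp_add]
    apply Real.exp_le_exp.mpr
    have : x < r := hr
    nlinarith
  have h2 : ∫ r in Set.Ioi x, Real.exp (-x ^ 2) * Real.exp (-(r - x) ^ 2) ≤
      ∫ r, Real.exp (-x ^ 2) * Real.exp (-(r - x) ^ 2) :=
    setIntegral_le_integral (hi.const_mul _) (Eventually.of_forall fun r => by positivity)
  have h3 : ∫ r : ℝ, Real.exp (-(r - x) ^ 2) = Real.sqrt Real.pi := by
    rw [integral_sub_right_eq_self (fun r : ℝ => Real.exp (-r ^ 2)) x]
    simpa using integral_gaussian 1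
  have h4 : ∫ r : ℝ, Real.exp (-x ^ 2) * Real.exp (-(r - x) ^ 2) =
      Real.exp (-x ^ 2) * Real.sqrt Real.pi := by rw [integral_const_mul, h3]
  rw [h4] at h2
  unfold erfc
  calc _ ≤ 2 / Real.sqrt Real.pi * (Real.exp (-x ^ 2) * Real.sqrt Real.pi) := by
        gcongr; exact h1.trans h2
    _ = _ := by field_simp

/-- sgn(w) erfc(c|w|) -/
def FF (c w : ℝ) : ℂ := (Real.sign w : ℂ) * (erfc (c * |w|) : ℂ)

lemma FF_neg (c w : ℝ) : FF c (-w) = - FF c w := by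
  simp [FF, Real.sign_neg]

lemma FF_eq (c w : ℝ) : FF c w = Real.sign w - (2 / Real.sqrt Real.pi) * PP c w := by
  unfold FF
  rw [erfc_eq, ← sign_PP (c : ℂ) w]; ring

lemma FF_pos (c w : ℝ) (hw : 0 < w) : FF c w = 1 - (2 / Real.sqrt Real.pi) * PP c w := by
  rw [FF_eq, Real.sign_of_pos hw]; simp

lemma PP_cont (z : ℂ) : Continuous (PP z) :=
  continuous_iff_continuousAt.mpr fun x => (PP_hasDerivAt z x).continuousAt

lemma FF_meas (c : ℝ) : Measurable (FF c) := by
  have h1 : Measurable Real.sign := by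
    unfold Real.sign
    exact Measurable.ite measurableSet_Iio measurable_const
      (Measurable.ite measurableSet_Ioi measurable_const measurable_const)
  have : FF c = fun w => (Real.sign w : ℂ) - (2 / Real.sqrt Real.pi) * PP c w := by
    ext w; exact FF_eq c w
  rw [this]
  have := (PP_cont c).measurable
  fun_prop

lemma FF_bound (c w : ℝ) (hc : 0 ≤ c) : ‖FF c w‖ ≤ 2 * Real.exp (-c ^ 2 * w ^ 2) := by
  unfold FF
  have h1 : ‖(Real.sign w : ℂ)‖ ≤ 1 := by
    rcases Real.sign_apply_eq w with h | h | h <;> simp [h]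
  have h2 := erfc_le (c * |w|) (by positivity)
  rw [norm_mul, Complex.norm_real, Complex.norm_real, Real.norm_of_nonneg (erfc_nonneg _)]
  rw [Complex.norm_real] at h1
  have e : -(c * |w|) ^ 2 = -c ^ 2 * w ^ 2 := by rw [mul_pow, sq_abs]; ring
  rw [e] at h2
  calc _ ≤ 1 * (2 * Real.exp (-c ^ 2 * w ^ 2)) := by
        gcongr
        exact erfc_nonneg _
    _ = _ := one_mul _

/-- the one-variable function -/
def ff (σ : ℂ) (c w : ℝ) : ℂ := Complex.exp (-Real.pi * Complex.I * σ * (w : ℂ) ^ 2) * FF c w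

/-- the phase -/
def ph (x w : ℝ) : ℂ := Complex.exp (-2 * Real.pi * Complex.I * x * w)

lemma ph_norm (x w : ℝ) : ‖ph x w‖ = 1 := by
  unfold ph
  rw [Complex.norm_exp]
  simp

lemma ph_cont (x : ℝ) : Continuous (ph x) := by unfold ph; fun_prop

lemma ff_bound (σ : ℂ) (c w : ℝ) (hc : 0 ≤ c) (hcs : c ^ 2 = 2 * Real.pi * σ.im) :
    ‖ff σ c w‖ ≤ 2 * Real.exp (-(Real.pi * σ.im) * w ^ 2) := by
  unfold ff
  have h1 : ‖Complex.exp (-Real.pi * Complex.I * σ * (w : ℂ) ^ 2)‖ =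
      Real.exp (Real.pi * σ.im * w ^ 2) := by
    rw [Complex.norm_exp]
    congr 1
    rw [← Complex.ofReal_pow, Complex.re_mul_ofReal]
    simp
  rw [norm_mul, h1]
  calc _ ≤ Real.exp (Real.pi * σ.im * w ^ 2) * (2 * Real.exp (-c ^ 2 * w ^ 2)) := by
        gcongr; exact FF_bound c w hc
    _ = 2 * (Real.exp (Real.pi * σ.im * w ^ 2) * Real.exp (-c ^ 2 * w ^ 2)) := by ring
    _ = _ := by rw [← Real.exp_add, hcs]; ring_nf

lemma ff_meas (σ : ℂ) (c : ℝ) : Measurable (ff σ c) := by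
  unfold ff
  exact Measurable.mul (by fun_prop) (FF_meas c)

lemma ff_int (σ : ℂ) (c : ℝ) (hc : 0 ≤ c) (hσ : 0 < σ.im) (hcs : c ^ 2 = 2 * Real.pi * σ.im) :
    Integrable (ff σ c) := by
  have hb : 0 < Real.pi * σ.im := by positivity
  refine Integrable.mono' ((integrable_exp_neg_mul_sq hb).const_mul 2)
    (ff_meas σ c).aestronglyMeasurable (Eventually.of_forall fun w => ff_bound σ c w hc hcs)

lemma wff_int (σ : ℂ) (c : ℝ) (hc : 0 ≤ c) (hσ : 0 < σ.im) (hcs : c ^ 2 = 2 * Real.pi * σ.im) :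
    Integrable (fun w : ℝ => (w : ℂ) * ff σ c w) := by
  have hb : 0 < Real.pi * σ.im := by positivity
  refine Integrable.mono' ((integrable_mul_exp_neg_mul_sq hb).norm.const_mul 2)
    (Measurable.mul (by fun_prop) (ff_meas σ c)).aestronglyMeasurable
    (Eventually.of_forall fun w => ?_)
  have := ff_bound σ c w hc hcs
  rw [norm_mul, norm_mul, Complex.norm_real, Real.norm_of_nonneg (Real.exp_pos _).le]
  calc _ ≤ ‖w‖ * (2 * Real.exp (-(Real.pi * σ.im) * w ^ 2)) := by gcongr
    _ = _ := by ring

lemma ph_mul_int (x : ℝ) {g : ℝ → ℂ} (hg : Integrable g) :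
    Integrable (fun w => ph x w * g w) :=
  hg.bdd_mul (c := 1) (ph_cont x).aestronglyMeasurable
    (Eventually.of_forall fun w => (ph_norm x w).le)

/-- derivative kernel, first part -/
def k1 (σ : ℂ) (c x w : ℝ) : ℂ :=
  ph x w * ((-2 * Real.pi * Complex.I * σ) * ((w : ℂ) * ff σ c w)
    + (-2 * Real.pi * Complex.I * x) * ff σ c w)

/-- derivative kernel, second part -/
def k2 (σ : ℂ) (c x w : ℝ) : ℂ :=
  Complex.exp ((-Real.pi * Complex.I * σ - (c : ℂ) ^ 2) * (w : ℂ) ^ 2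
    + (-2 * Real.pi * Complex.I * x) * w + 0)

lemma bre (σ : ℂ) (c : ℝ) (hσ : 0 < σ.im) (hcs : c ^ 2 = 2 * Real.pi * σ.im) :
    (-Real.pi * Complex.I * σ - (c : ℂ) ^ 2).re < 0 := by
  rw [← Complex.ofReal_pow, hcs]
  simp
  nlinarith [mul_pos Real.pi_pos hσ]

lemma k1_int (σ : ℂ) (c x : ℝ) (hc : 0 ≤ c) (hσ : 0 < σ.im) (hcs : c ^ 2 = 2 * Real.pi * σ.im) :
    Integrable (k1 σ c x) :=
  ph_mul_int x (((wff_int σ c hc hσ hcs).const_mul _).add ((ff_int σ c hc hσ hcs).const_mul _))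

lemma k2_int (σ : ℂ) (c x : ℝ) (hσ : 0 < σ.im) (hcs : c ^ 2 = 2 * Real.pi * σ.im) :
    Integrable (k2 σ c x) :=
  integrable_cexp_quadratic' (bre σ c hσ hcs) _ _

/-- derivative kernel -/
def kk (σ : ℂ) (c x w : ℝ) : ℂ := k1 σ c x w - (2 / Real.sqrt Real.pi) * c * k2 σ c x w

lemma kk_int (σ : ℂ) (c x : ℝ) (hc : 0 ≤ c) (hσ : 0 < σ.im) (hcs : c ^ 2 = 2 * Real.pi * σ.im) :
    Integrable (kk σ c x) :=
  (k1_int σ c x hc hσ hcs).sub ((k2_int σ c x hσ hcs).const_mul _)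

lemma kk_half (σ : ℂ) (c x : ℝ) (hc : 0 ≤ c) (hσ : 0 < σ.im)
    (hcs : c ^ 2 = 2 * Real.pi * σ.im) : ∫ w in Ioi (0:ℝ), kk σ c x w = -1 := by
  set H : ℝ → ℂ := fun w => Complex.exp (-Real.pi * Complex.I * σ * (w : ℂ) ^ 2) * ph x w *
    (1 - (2 / Real.sqrt Real.pi) * PP c w) with hH
  have hd : ∀ w : ℝ, HasDerivAt H
      (Complex.exp (-Real.pi * Complex.I * σ * (w : ℂ) ^ 2) * ph x w *
        ((-2 * Real.pi * Complex.I * σ * w - 2 * Real.pi * Complex.I * x) *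
          (1 - (2 / Real.sqrt Real.pi) * PP c w)
        - (2 / Real.sqrt Real.pi) * (c * Complex.exp (-((c:ℂ) ^ 2) * (w : ℂ) ^ 2)))) w := by
    intro w
    have h0 : HasDerivAt (fun w : ℝ => (w : ℂ)) 1 w := Complex.ofRealCLM.hasDerivAt
    have h1 := (((h0.pow 2).const_mul (-Real.pi * Complex.I * σ)).cexp)
    have h2 := (h0.const_mul (-2 * Real.pi * Complex.I * x)).cexp
    have h3 := ((PP_hasDerivAt c w).const_mul ((2 : ℂ) / Real.sqrt Real.pi)).const_sub 1
    refine ((h1.mul h2).mul h3).congr_deriv ?_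
    simp only [ph, Pi.mul_apply, Pi.pow_apply]
    push_cast
    ring
  have hk : ∀ w ∈ Ioi (0:ℝ), HasDerivAt H (kk σ c x w) w := by
    intro w hw
    refine (hd w).congr_deriv ?_
    unfold kk k1 k2 ff
    rw [FF_pos c w hw, add_zero, Complex.exp_add]
    have : (-Real.pi * Complex.I * σ - (c : ℂ) ^ 2) * (w : ℂ) ^ 2 =
      -Real.pi * Complex.I * σ * (w : ℂ) ^ 2 + -((c:ℂ) ^ 2) * (w : ℂ) ^ 2 := by ring
    rw [this, Complex.exp_add]
    unfold ph
    ring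
  have ht : Tendsto H atTop (𝓝 0) := by
    have hb : 0 < Real.pi * σ.im := by positivity
    have hlim : Tendsto (fun w : ℝ => 2 * Real.exp (-(Real.pi * σ.im) * w ^ 2)) atTop (𝓝 0) := by
      rw [← mul_zero (2:ℝ)]
      refine Tendsto.const_mul 2 (Real.tendsto_exp_atBot.comp ?_)
      exact Tendsto.const_mul_atTop_of_neg (by linarith) (tendsto_pow_atTop two_ne_zero)
    refine squeeze_zero_norm' ?_ hlim
    filter_upwards [eventually_gt_atTop 0] with w hw
    have := ff_bound σ c w hc hcs
    unfold ff at this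
    rw [FF_pos c w hw] at this
    rw [hH]
    simpa only [norm_mul, ph_norm, mul_one] using this
  rw [integral_Ioi_of_hasDerivAt_of_tendsto (hd 0).continuousAt.continuousWithinAt hk
    (kk_int σ c x hc hσ hcs).integrableOn ht]
  simp [hH, ph, PP_zero]

lemma ff_neg (σ : ℂ) (c w : ℝ) : ff σ c (-w) = - ff σ c w := by
  simp [ff, FF_neg]

lemma ph_neg (x w : ℝ) : ph x (-w) = ph (-x) w := by
  simp [ph]

lemma kk_neg (σ : ℂ) (c x w : ℝ) : kk σ c (-x) (-w) = kk σ c x w := by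
  unfold kk k1 k2
  rw [ff_neg, ph_neg, neg_neg]
  push_cast
  ring_nf

lemma kk_full (σ : ℂ) (c x : ℝ) (hc : 0 ≤ c) (hσ : 0 < σ.im)
    (hcs : c ^ 2 = 2 * Real.pi * σ.im) : ∫ w, kk σ c x w = -2 := by
  have hi := kk_int σ c x hc hσ hcs
  rw [← intervalIntegral.integral_Iic_add_Ioi (b := 0) hi.integrableOn hi.integrableOn,
    kk_half σ c x hc hσ hcs]
  have h := integral_comp_neg_Iic 0 (kk σ c (-x))
  simp only [kk_neg, neg_zero] at h
  rw [h, kk_half σ c (-x) hc hσ hcs]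
  norm_num

lemma k2_integral (σ : ℂ) (c x : ℝ) (hσ : 0 < σ.im) (hcs : c ^ 2 = 2 * Real.pi * σ.im) :
    ∫ w, k2 σ c x w = (1 / (Complex.I * conj σ)) ^ (1 / 2 : ℂ) *
      Complex.exp (-Real.pi * x ^ 2 / (Complex.I * conj σ)) := by
  unfold k2
  rw [integral_cexp_quadratic (bre σ c hσ hcs)]
  have hb : (-Real.pi * Complex.I * σ - (c : ℂ) ^ 2) = - (Real.pi * (Complex.I * conj σ)) := by
    rw [← Complex.ofReal_pow, hcs]
    apply Complex.ext <;> simp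
    ring
  have hp : (Real.pi : ℂ) ≠ 0 := by exact_mod_cast Real.pi_ne_zero
  have hs : conj σ ≠ 0 := by
    intro h
    have := congrArg Complex.im h
    simp at this
    linarith
  rw [hb]
  congr 2
  · field_simp
  · field_simp
    ring_nf
    simp [Complex.I_sq]

/-- the Fourier transform in the first variable -/
def GG (σ : ℂ) (c x : ℝ) : ℂ := ∫ w, ph x w * ff σ c w

lemma GG_hasDerivAt (σ : ℂ) (c x : ℝ) (hc : 0 ≤ c) (hσ : 0 < σ.im)
    (hcs : c ^ 2 = 2 * Real.pi * σ.im) :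
    HasDerivAt (GG σ c) (∫ w, ph x w * ((-2 * Real.pi * Complex.I * w) * ff σ c w)) x := by
  have h := Real.hasDerivAt_fourier (ff_int σ c hc hσ hcs)
    (by simpa only [Complex.real_smul] using wff_int σ c hc hσ hcs) x
  have e : 𝓕 (ff σ c) = GG σ c := by
    ext y
    rw [Real.fourier_real_eq_integral_exp_smul]
    unfold GG ph
    congr 1
    ext w
    rw [smul_eq_mul]
    congr 2
    push_cast
    ring
  rw [e, Real.fourier_real_eq_integral_exp_smul] at h
  refine h.congr_deriv ?_
  congr 1
  ext w
  rw [smul_eq_mul, smul_eq_mul]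
  unfold ph
  congr 2
  push_cast
  ring

lemma GG_deriv_eq (σ : ℂ) (c x : ℝ) (hc : 0 ≤ c) (hσ : 0 < σ.im)
    (hcs : c ^ 2 = 2 * Real.pi * σ.im) :
    σ * (∫ w, ph x w * ((-2 * Real.pi * Complex.I * w) * ff σ c w)) =
      2 * Real.pi * Complex.I * x * GG σ c x - 2
      + (2 / Real.sqrt Real.pi) * c * ∫ w, k2 σ c x w := by
  have h := kk_full σ c x hc hσ hcs
  have i1 : Integrable (fun w => ph x w * ((-2 * Real.pi * Complex.I * w) * ff σ c w)) := by
    have := ph_mul_int x ((wff_int σ c hc hσ hcs).const_mul (-2 * Real.pi * Complex.I))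
    refine this.congr (Eventually.of_forall fun w => ?_)
    simp only []
    ring
  have i2 := ph_mul_int x (ff_int σ c hc hσ hcs)
  have i3 := k2_int σ c x hσ hcs
  have e : kk σ c x = fun w => (σ * (ph x w * ((-2 * Real.pi * Complex.I * w) * ff σ c w))
      + (-2 * Real.pi * Complex.I * x) * (ph x w * ff σ c w))
      - (2 / Real.sqrt Real.pi) * c * k2 σ c x w := by
    ext w
    unfold kk k1
    ring
  rw [e, integral_sub (by exact (i1.const_mul _).add (i2.const_mul _)) (by exact i3.const_mul _),
    integral_add (by exact i1.const_mul _) (by exact i2.const_mul _), integral_const_mul, integral_const_mul,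
    integral_const_mul] at h
  unfold GG
  linear_combination h

lemma GG_zero (σ : ℂ) (c : ℝ) : GG σ c 0 = 0 := by
  have h := integral_neg_eq_self (fun w => ph 0 w * ff σ c w) volume
  simp only [ff_neg, ph_neg, neg_zero, mul_neg, integral_neg] at h
  unfold GG
  exact self_eq_neg.mp h.symm

lemma GG_formula (τ q : ℂ) (c d : ℝ) (hτ : 0 < τ.im) (hq : q = (-Complex.I * τ) ^ (1 / 2 : ℂ))
    (hd : d = Real.sqrt (2 * Real.pi * τ.im))
    (hc : c = Real.sqrt (2 * Real.pi * (-1 / τ).im)) (x : ℝ) :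
    Complex.exp (Real.pi * Complex.I * τ * (x : ℂ) ^ 2) * GG (-1 / τ) c x =
      Complex.I * q * (2 / Real.sqrt Real.pi) * (PP (Real.sqrt Real.pi * q) x - PP d x) := by
  have hτ0 : τ ≠ 0 := by rintro rfl; simp at hτ
  have hn : 0 < Complex.normSq τ := Complex.normSq_pos.mpr hτ0
  have hσim : (-1 / τ).im = τ.im / Complex.normSq τ := by simp [Complex.div_im]; ring
  have hσ : 0 < (-1 / τ).im := by rw [hσim]; positivity
  have hc0 : 0 ≤ c := by rw [hc]; positivity
  have hcs : c ^ 2 = 2 * Real.pi * (-1 / τ).im := by rw [hc, Real.sq_sqrt (by positivity)]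
  have hds : d ^ 2 = 2 * Real.pi * τ.im := by rw [hd, Real.sq_sqrt (by positivity)]
  have hq2 : q ^ 2 = -Complex.I * τ := by
    rw [hq, one_div]
    exact_mod_cast Complex.cpow_nat_inv_pow (-Complex.I * τ) (n := 2) two_ne_zero
  have hτq : τ = Complex.I * q ^ 2 := by
    rw [hq2, ← mul_assoc]; simp
  have hqq : q * conj q = (‖τ‖ : ℂ) := by
    rw [Complex.mul_conj, Complex.normSq_eq_norm_sq, ← norm_pow, hq2]; simp
  have hcd : c * ‖τ‖ = d := by
    have h0 : 0 ≤ d := by rw [hd]; positivity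
    have h1 : (c * ‖τ‖) ^ 2 = d ^ 2 := by
      rw [mul_pow, hcs, hds, hσim, Complex.normSq_eq_norm_sq]
      have : ‖τ‖ ≠ 0 := norm_ne_zero_iff.mpr hτ0
      field_simp
    exact (pow_left_inj₀ (by positivity) h0 two_ne_zero).mp h1
  have hcdC : (c : ℂ) * ‖τ‖ = d := by exact_mod_cast hcd
  have hconj : (1 / (Complex.I * conj (-1 / τ))) = conj (-Complex.I * τ) := by
    have : conj τ ≠ 0 := by simpa using hτ0
    simp only [map_div₀, map_neg, map_one, map_mul, Complex.conj_I]
    field_simp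
    simp
  have hre : 0 < (-Complex.I * τ).re := by simpa using hτ
  have harg : (-Complex.I * τ).arg ≠ Real.pi := by
    intro h
    rw [Complex.arg_eq_pi_iff] at h
    linarith [h.1]
  have hpow : (conj (-Complex.I * τ)) ^ (1 / 2 : ℂ) = conj q := by
    rw [Complex.conj_cpow _ _ harg, hq]
    congr 2
    simp
    exact Complex.conj_ofNat 2
  have hsp : (Real.sqrt Real.pi : ℂ) ≠ 0 := by
    exact_mod_cast (Real.sqrt_pos.mpr Real.pi_pos).ne'
  have hsp2 : (Real.sqrt Real.pi : ℂ) ^ 2 = Real.pi := by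
    exact_mod_cast Real.sq_sqrt Real.pi_pos.le
  have hexp : ∀ y : ℝ, Complex.exp (Real.pi * Complex.I * τ * (y : ℂ) ^ 2) *
      Complex.exp (-Real.pi * (y:ℂ) ^ 2 / (Complex.I * conj (-1 / τ))) =
      Complex.exp (-((d:ℂ) ^ 2) * (y:ℂ) ^ 2) := by
    intro y
    rw [← Complex.exp_add]
    congr 1
    have h1 : -Real.pi * (y:ℂ) ^ 2 / (Complex.I * conj (-1 / τ)) =
        -Real.pi * (y:ℂ) ^ 2 * (1 / (Complex.I * conj (-1 / τ))) := by ring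
    rw [h1, hconj, ← Complex.ofReal_pow d, hds]
    have h2 : Complex.I * (τ - conj τ) = - (2 * τ.im : ℝ) := by
      rw [Complex.sub_conj]; push_cast; linear_combination (2 * (τ.im : ℂ)) * Complex.I_sq
    have h3 : conj (-Complex.I * τ) = Complex.I * conj τ := by simp
    rw [h3]
    push_cast at h2 ⊢
    linear_combination (Real.pi * (y:ℂ) ^ 2) * h2
  set D : ℝ → ℂ := fun x => Complex.exp (Real.pi * Complex.I * τ * (x : ℂ) ^ 2) * GG (-1 / τ) c x -
      Complex.I * q * (2 / Real.sqrt Real.pi) * (PP (Real.sqrt Real.pi * q) x - PP d x) with hD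
  have hDd : ∀ y, HasDerivAt D 0 y := by
    intro y
    have h0 : HasDerivAt (fun w : ℝ => (w : ℂ)) 1 y := Complex.ofRealCLM.hasDerivAt
    have h1 := (((h0.pow 2).const_mul (Real.pi * Complex.I * τ)).cexp)
    have h2 := GG_hasDerivAt (-1 / τ) c y hc0 hσ hcs
    have h3 := ((PP_hasDerivAt (Real.sqrt Real.pi * q) y).sub (PP_hasDerivAt d y)).const_mul
      (Complex.I * q * (2 / Real.sqrt Real.pi))
    refine ((h1.mul h2).sub h3).congr_deriv ?_
    have h4 := GG_deriv_eq (-1 / τ) c y hc0 hσ hcs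
    rw [k2_integral _ c y hσ hcs, hconj, hpow] at h4
    have h5 := hexp y
    have h6 : Complex.exp (-((Real.sqrt Real.pi * q) ^ 2) * (y:ℂ) ^ 2) =
        Complex.exp (Real.pi * Complex.I * τ * (y : ℂ) ^ 2) := by
      congr 1
      rw [mul_pow, hsp2, hq2]; ring
    rw [h6]
    simp only [Pi.pow_apply]
    generalize (∫ w, ph y w * ((-2 * Real.pi * Complex.I * w) * ff (-1 / τ) c w)) = J at *
    generalize Complex.exp (-Real.pi * (y:ℂ) ^ 2 / (Complex.I * conj (-1 / τ))) = E2 at *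
    generalize Complex.exp (Real.pi * Complex.I * τ * (y : ℂ) ^ 2) = E1 at *
    generalize GG (-1 / τ) c y = G at *
    rw [← h5]
    have h7 : J = -τ * (2 * Real.pi * Complex.I * y * G - 2
      + (2 / Real.sqrt Real.pi) * c * (conj q * E2)) := by
      rw [← h4]; field_simp
    have h8 : τ * c * conj q = Complex.I * q * d := by
      rw [← hcdC, ← hqq]
      linear_combination (c * conj q) * hτq
    have h9 : (2 / (Real.sqrt Real.pi : ℂ)) * Real.sqrt Real.pi = 2 := by field_simp
    rw [h7]
    push_cast
    linear_combination (-(2 / (Real.sqrt Real.pi : ℂ)) * E1 * E2) * h8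
      + 2 * E1 * hτq - Complex.I * q ^ 2 * E1 * h9
  have hDc := is_const_of_deriv_eq_zero (fun y => (hDd y).differentiableAt)
    (fun y => (hDd y).deriv) x 0
  have hD0 : D 0 = 0 := by simp [hD, GG_zero, PP_zero]
  rw [hD0] at hDc
  exact sub_eq_zero.mp hDc

lemma csqrt_eq (τ : ℂ) (hτ0 : τ ≠ 0) :
    csqrt (-Complex.I * (Real.pi : ℂ) * τ) =
      Real.sqrt Real.pi * (-Complex.I * τ) ^ (1 / 2 : ℂ) := by
  unfold csqrt
  have h0 : -Complex.I * τ ≠ 0 := by simp [hτ0]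
  have hp : (Real.pi : ℂ) ≠ 0 := by exact_mod_cast Real.pi_ne_zero
  have e : -Complex.I * (Real.pi : ℂ) * τ = (Real.pi : ℂ) * (-Complex.I * τ) := by ring
  rw [e, Complex.cpow_def_of_ne_zero (mul_ne_zero hp h0), Complex.cpow_def_of_ne_zero h0,
    Complex.log_ofReal_mul Real.pi_pos h0, add_mul, Complex.exp_add]
  congr 1
  rw [Real.sqrt_eq_rpow, Real.rpow_def_of_pos Real.pi_pos]
  push_cast
  rfl

lemma integrand_eq (σ : ℂ) (x y : ℝ) (p : ℝ × ℝ) :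
    phiStar σ p.1 p.2 * eC ((-(p.1 * x) + p.2 * y : ℝ) : ℂ) =
      (ph x p.1 * ff σ (Real.sqrt (2 * Real.pi * σ.im)) p.1) *
      Complex.exp (Real.pi * Complex.I * σ * (p.2 : ℂ) ^ 2 +
        2 * Real.pi * Complex.I * y * p.2 + 0) := by
  unfold phiStar eC ph ff FF
  have key : Complex.exp (2 * Real.pi * Complex.I * ((((p.2 : ℂ) ^ 2 - (p.1 : ℂ) ^ 2) / 2) * σ)) *
      Complex.exp (2 * Real.pi * Complex.I * ((-(p.1 * x) + p.2 * y : ℝ) : ℂ)) =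
      Complex.exp (-2 * Real.pi * Complex.I * x * p.1) *
      Complex.exp (-Real.pi * Complex.I * σ * (p.1 : ℂ) ^ 2) *
      Complex.exp (Real.pi * Complex.I * σ * (p.2 : ℂ) ^ 2 +
        2 * Real.pi * Complex.I * y * p.2 + 0) := by
    rw [← Complex.exp_add, ← Complex.exp_add, ← Complex.exp_add]
    congr 1
    push_cast
    ring
  linear_combination ((Real.sign p.1 : ℂ) *
    (erfc (Real.sqrt (2 * Real.pi * σ.im) * |p.1|) : ℂ)) * key

/-- the Fourier transform of `φ*_{-1/τ}` converges absolutely, and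
`φ*_τ(x,y) - τ⁻¹·F(φ*_{-1/τ})(x,y) = e(((y²-x²)/2)τ)·sgn(x)·erfc(√(-iπτ)|x|)`. -/
theorem stmt2 (τ : ℂ) (hτ : 0 < τ.im) :
    (∀ x y : ℝ, Integrable (fun p : ℝ × ℝ =>
      phiStar (-1 / τ) p.1 p.2 * eC ((-(p.1 * x) + p.2 * y : ℝ) : ℂ))) ∧
    (∀ x y : ℝ, x ≠ 0 →
      phiStar τ x y -
          τ⁻¹ * ∫ p : ℝ × ℝ, phiStar (-1 / τ) p.1 p.2 * eC ((-(p.1 * x) + p.2 * y : ℝ) : ℂ) =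
        eC ((((y : ℂ) ^ 2 - (x : ℂ) ^ 2) / 2) * τ) * (Real.sign x : ℂ) *
          erfcC (csqrt (-Complex.I * (Real.pi : ℂ) * τ) * (|x| : ℝ))) := by
  have hτ0 : τ ≠ 0 := by rintro rfl; simp at hτ
  have hn : 0 < Complex.normSq τ := Complex.normSq_pos.mpr hτ0
  have hσim : (-1 / τ).im = τ.im / Complex.normSq τ := by simp [Complex.div_im]; ring
  have hσ : 0 < (-1 / τ).im := by rw [hσim]; positivity
  have hre : (Real.pi * Complex.I * (-1 / τ)).re < 0 := by
    have : (Real.pi * Complex.I * (-1 / τ)).re = - (Real.pi * (-1 / τ).im) := by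
      rw [mul_assoc, Complex.re_ofReal_mul, Complex.I_mul_re]; ring
    rw [this]
    have := mul_pos Real.pi_pos hσ
    linarith
  constructor
  · intro x y
    simp_rw [integrand_eq]
    exact (ph_mul_int x (ff_int _ _ (Real.sqrt_nonneg _) hσ
      (Real.sq_sqrt (by positivity)))).mul_prod (integrable_cexp_quadratic' hre _ _)
  · intro x y _
    simp_rw [integrand_eq]
    have hI := integral_prod_mul (μ := (volume : Measure ℝ)) (ν := (volume : Measure ℝ))
      (fun w : ℝ => ph x w * ff (-1 / τ) (Real.sqrt (2 * Real.pi * (-1 / τ).im)) w)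
      (fun z : ℝ => Complex.exp (Real.pi * Complex.I * (-1 / τ) * (z : ℂ) ^ 2 +
        2 * Real.pi * Complex.I * y * z + 0))
    rw [← Measure.volume_eq_prod] at hI
    rw [hI, integral_cexp_quadratic hre]
    have hG := GG_formula τ _ _ _ hτ rfl rfl rfl x
    unfold GG at hG
    have hp : (Real.pi : ℂ) ≠ 0 := by exact_mod_cast Real.pi_ne_zero
    have e1 : (Real.pi : ℂ) / -(Real.pi * Complex.I * (-1 / τ)) = -Complex.I * τ := by
      field_simp
      simp
    have e2 : (0 : ℂ) - (2 * Real.pi * Complex.I * y) ^ 2 / (4 * (Real.pi * Complex.I * (-1 / τ)))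
        = Real.pi * Complex.I * τ * (y : ℂ) ^ 2 := by
      field_simp
      ring
    have hq2 : ((-Complex.I * τ) ^ (1 / 2 : ℂ)) ^ 2 = -Complex.I * τ := by
      rw [one_div]
      exact_mod_cast Complex.cpow_nat_inv_pow (-Complex.I * τ) (n := 2) two_ne_zero
    rw [e1, e2, csqrt_eq τ hτ0, erfcC_mul]
    unfold phiStar
    rw [erfc_eq]
    have e3 : eC ((((y : ℂ) ^ 2 - (x : ℂ) ^ 2) / 2) * τ) *
        Complex.exp (Real.pi * Complex.I * τ * (x : ℂ) ^ 2) =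
        Complex.exp (Real.pi * Complex.I * τ * (y : ℂ) ^ 2) := by
      unfold eC
      rw [← Complex.exp_add]
      congr 1
      ring
    rw [← e3]
    have s1 := sign_PP (Real.sqrt (2 * Real.pi * τ.im) : ℂ) x
    have s2 := sign_PP (Real.sqrt Real.pi * (-Complex.I * τ) ^ (1 / 2 : ℂ)) x
    generalize eC ((((y : ℂ) ^ 2 - (x : ℂ) ^ 2) / 2) * τ) = E at *
    generalize (∫ w : ℝ, ph x w * ff (-1 / τ) (Real.sqrt (2 * Real.pi * (-1 / τ).im)) w) = G at *
    generalize (-Complex.I * τ) ^ (1 / 2 : ℂ) = q at *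
    generalize Complex.exp (Real.pi * Complex.I * τ * (x : ℂ) ^ 2) = X at *
    have hti : τ⁻¹ * τ = 1 := inv_mul_cancel₀ hτ0
    rw [← s1, ← s2] at hG
    generalize PP (Real.sqrt (2 * Real.pi * τ.im) : ℂ) |x| = P1 at *
    generalize PP (Real.sqrt Real.pi * q) |x| = P2 at *
    have hq3 : τ⁻¹ * (Complex.I * q ^ 2) = 1 := by
      rw [hq2, ← hti]
      linear_combination (-τ⁻¹ * τ) * Complex.I_sq
    linear_combination (-τ⁻¹ * q * E) * hG
      - (E * (2 / (Real.sqrt Real.pi : ℂ)) * Real.sign x * (P2 - P1)) * hq3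

end
end

section
/- Let τ ∈ H. For every (x,y) ∈ ℝ² with x² ≠ y², the regularized Fourier transform F(φ⁺_τ)(x,y) := lim_{T'→∞} ∫_{−T'}^{T'} ( lim_{T→∞} ∫_{−T}^{T} φ⁺_τ((a−b)/√2, (a+b)/√2)·e( −((a−b)/√2)·x + ((a+b)/√2)·y ) db ) da exists (both the inner and outer limits exist), and moreover sup{ |F(φ⁺_τ)(x,y)| : (x,y) ∈ ℝ², x² ≠ y² } < ∞. -/
open MeasureTheory Filter Set intervalIntegral

noncomputable section

/-- `φ⁺_τ(x,y) = e(((y²-x²)/2)τ)·sgn(x)·1_{y²>x²}`. -/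
def phiPlus (τ : ℂ) (x y : ℝ) : ℂ :=
  eC ((((y : ℂ) ^ 2 - (x : ℂ) ^ 2) / 2) * τ) * (Real.sign x : ℂ) *
    (if x ^ 2 < y ^ 2 then 1 else 0)

/-- The rotated integrand of the regularized Fourier transform of `φ⁺_τ`. -/
def ftPlusIntegrand (τ : ℂ) (x y a b : ℝ) : ℂ :=
  phiPlus τ ((a - b) / Real.sqrt 2) ((a + b) / Real.sqrt 2) *
    eC ((-(((a - b) / Real.sqrt 2) * x) + ((a + b) / Real.sqrt 2) * y : ℝ) : ℂ)



lemma norm_eC (z : ℂ) : ‖eC z‖ = Real.exp (-(2 * Real.pi * z.im)) := by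
  unfold eC
  rw [Complex.norm_exp]
  congr 1
  simp

lemma norm_eC_real (r : ℝ) : ‖eC (r : ℂ)‖ = 1 := by
  rw [norm_eC]; simp

lemma eC_add (z w : ℂ) : eC (z + w) = eC z * eC w := by
  unfold eC; rw [← Complex.exp_add]; congr 1; ring

lemma norm_eC_sub_one (r : ℝ) : ‖eC (r : ℂ) - 1‖ ≤ 2 * Real.pi * |r| := by
  have := Real.norm_exp_I_mul_ofReal_sub_one_le (x := 2 * Real.pi * r)
  have e : eC (r : ℂ) = Complex.exp (Complex.I * ((2 * Real.pi * r : ℝ) : ℂ)) := by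
    unfold eC; congr 1; push_cast; ring
  rw [e]
  refine this.trans (le_of_eq ?_)
  rw [Real.norm_eq_abs, abs_mul, abs_of_pos (by positivity : 0 < 2 * Real.pi)]

lemma continuous_eC : Continuous eC := by
  unfold eC; fun_prop

lemma den_im (τ : ℂ) (hτ : 0 < τ.im) (a q : ℝ) (ha : 0 ≤ a) :
    a * τ.im ≤ ‖(a : ℂ) * τ + q‖ := by
  have := Complex.abs_im_le_norm ((a : ℂ) * τ + q)
  refine (le_abs_self _).trans (le_of_eq_of_le ?_ this)
  simp

lemma den_ne (τ : ℂ) (hτ : 0 < τ.im) (a q : ℝ) (hq : q ≠ 0) :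
    (a : ℂ) * τ + q ≠ 0 := by
  intro h
  have h1 := congrArg Complex.im h
  simp at h1
  rcases h1 with h1 | h1
  · subst h1; simp at h; exact hq h
  · exact hτ.ne' h1

lemma den_ne' (τ : ℂ) (hτ : 0 < τ.im) (a q : ℝ) (ha : 0 < a) :
    (a : ℂ) * τ + q ≠ 0 := by
  intro h
  have := den_im τ hτ a q ha.le
  rw [h, norm_zero] at this
  have := mul_pos ha hτ
  linarith

def KK (τ : ℂ) : ℝ := 1 / τ.im + 1 + ‖τ‖ / τ.im

lemma KK_pos (τ : ℂ) (hτ : 0 < τ.im) : 0 < KK τ := by unfold KK; positivity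

lemma den_low (τ : ℂ) (hτ : 0 < τ.im) (a q : ℝ) (ha : 0 ≤ a) :
    a + |q| ≤ KK τ * ‖(a : ℂ) * τ + q‖ := by
  have h1 := den_im τ hτ a q ha
  have h2 : |q| ≤ ‖(a : ℂ) * τ + q‖ + a * ‖τ‖ := by
    have := norm_sub_le ((a : ℂ) * τ + q) (a * τ)
    simp at this
    rwa [abs_of_nonneg ha] at this
  set N := ‖(a : ℂ) * τ + q‖
  have h3 : a ≤ N / τ.im := by rwa [le_div_iff₀ hτ]
  have h4 : a * ‖τ‖ ≤ N / τ.im * ‖τ‖ := by gcongr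
  have : KK τ * N = N / τ.im + N + N / τ.im * ‖τ‖ := by unfold KK; ring
  linarith

/-- integral of an `O(1/a²)` function. -/
lemma int_inv_sq (f : ℝ → ℂ) (B S T : ℝ) (hS : 0 < S) (hST : S ≤ T) (hB : 0 ≤ B)
    (hf : ∀ a, S ≤ a → ‖f a‖ ≤ B / a ^ 2) : ‖∫ a in S..T, f a‖ ≤ B / S := by
  have hT : 0 < T := hS.trans_le hST
  have hci : IntervalIntegrable (fun a : ℝ => B / a ^ 2) volume S T := by
    apply ContinuousOn.intervalIntegrable
    rw [uIcc_of_le hST]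
    apply ContinuousOn.div (by fun_prop) (by fun_prop)
    intro a ha
    have : 0 < a := hS.trans_le ha.1
    positivity
  have hi : ∫ a in S..T, B / a ^ 2 = -B / T - -B / S := by
    apply integral_eq_sub_of_hasDerivAt (f := fun a : ℝ => -B / a) _ hci
    intro a ha
    rw [uIcc_of_le hST] at ha
    have h0 : a ≠ 0 := (hS.trans_le ha.1).ne'
    convert! (hasDerivAt_inv h0).const_mul (-B) using 1
    field_simp
  have := norm_integral_le_of_norm_le hST (f := f) (g := fun a => B / a ^ 2) (μ := volume)
    (ae_of_all _ fun a ha => hf a ha.1.le) hci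
  rw [hi] at this
  have h2 : 0 ≤ B / T := by positivity
  have h3 : -B / T - -B / S = B / S - B / T := by ring
  linarith

def Jf (τ : ℂ) (h : ℝ → ℂ) (r q a : ℝ) : ℂ := eC ((a * r : ℝ) : ℂ) * (h a / (a * τ + q))

lemma cont_Jf (τ : ℂ) (hτ : 0 < τ.im) (h : ℝ → ℂ) (hc : Continuous h) (r q : ℝ) (hq : q ≠ 0) :
    Continuous (Jf τ h r q) := by
  unfold Jf
  refine Continuous.mul (continuous_eC.comp (by fun_prop)) (hc.div (by fun_prop) ?_)
  intro a; exact den_ne τ hτ a q hq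

lemma norm_quot (τ : ℂ) (hτ : 0 < τ.im) (z : ℂ) (B a q : ℝ) (ha : 0 < a) (hz : ‖z‖ ≤ B) :
    ‖z / (a * τ + q)‖ ≤ B / (a * τ.im) := by
  rw [norm_div]
  have := den_im τ hτ a q ha.le
  have : 0 < a * τ.im := by positivity
  have : 0 ≤ B := (norm_nonneg _).trans hz
  gcongr

lemma tail_bd (τ : ℂ) (hτ : 0 < τ.im) (h h' : ℝ → ℂ) (M : ℝ) (hM : 0 ≤ M)
    (hd : ∀ a, HasDerivAt h (h' a) a) (hc : Continuous h')
    (hb : ∀ a > 0, ‖h a‖ ≤ 1) (hb' : ∀ a > 0, ‖h' a‖ ≤ M / a) (r q S T : ℝ) (hr : r ≠ 0)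
    (hS : 0 < S) (hST : S ≤ T) :
    ‖∫ a in S..T, Jf τ h r q a‖ ≤
      (2 / τ.im + (M / τ.im + ‖τ‖ / τ.im ^ 2)) / (|r| * S) := by
  have hT : 0 < T := hS.trans_le hST
  have hch : Continuous h := continuous_iff_continuousAt.2 fun a => (hd a).continuousAt
  set c : ℂ := 2 * Real.pi * Complex.I * r with hcdef
  have hc0 : c ≠ 0 := by
    simp [hcdef, hr, Real.pi_ne_zero]
  have hcn : ‖c‖ = 2 * Real.pi * |r| := by
    simp [hcdef, abs_of_pos Real.pi_pos]
  set k : ℝ → ℂ := fun a => h a / (a * τ + q) with hk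
  set k' : ℝ → ℂ := fun a => (h' a * (a * τ + q) - h a * τ) / (a * τ + q) ^ 2 with hk'
  set w : ℝ → ℂ := fun a => eC ((a * r : ℝ) : ℂ) / c with hw
  have hpos : ∀ a ∈ uIcc S T, 0 < a := fun a ha => by
    rw [uIcc_of_le hST] at ha; exact hS.trans_le ha.1
  have hkd : ∀ a ∈ uIcc S T, HasDerivAt k (k' a) a := by
    intro a ha
    have hden : HasDerivAt (fun a : ℝ => (a : ℂ) * τ + q) τ a := by
      simpa using ((Complex.ofRealCLM.hasDerivAt (x := a)).mul_const τ).add_const (q : ℂ)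
    exact (hd a).div hden (den_ne' τ hτ a q (hpos a ha))
  have hwd : ∀ a ∈ uIcc S T, HasDerivAt w (eC ((a * r : ℝ) : ℂ)) a := by
    intro a _
    have h1 : HasDerivAt (fun a : ℝ => c * (a : ℂ)) c a := by
      simpa using (Complex.ofRealCLM.hasDerivAt (x := a)).const_mul c
    have h2 := h1.cexp.div_const c
    convert! h2 using 1
    · ext a; simp only [hw, eC, hcdef]; congr 2; push_cast; ring
    · rw [mul_div_cancel_right₀ _ hc0]; simp only [eC, hcdef]; congr 1; push_cast; ring
  have hk'i : IntervalIntegrable k' volume S T := by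
    apply ContinuousOn.intervalIntegrable
    apply ContinuousOn.div (Continuous.continuousOn (by fun_prop)) (Continuous.continuousOn (by fun_prop))
    intro a ha
    exact pow_ne_zero _ (den_ne' τ hτ a q (hpos a ha))
  have hwi : IntervalIntegrable (fun a : ℝ => eC ((a * r : ℝ) : ℂ)) volume S T :=
    (continuous_eC.comp (by fun_prop)).intervalIntegrable _ _
  have ibp := integral_mul_deriv_eq_deriv_mul hkd hwd hk'i hwi
  have hJ : ∫ a in S..T, Jf τ h r q a = ∫ a in S..T, k a * eC ((a * r : ℝ) : ℂ) := by
    congr 1; ext a; simp only [Jf, hk]; ring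
  have hwn : ∀ a, ‖w a‖ = 1 / (2 * Real.pi * |r|) := by
    intro a; simp only [hw]; rw [norm_div, norm_eC_real, hcn]
  have hv := hτ
  set v := τ.im
  have hkn : ∀ a, 0 < a → ‖k a‖ ≤ 1 / (a * v) := fun a ha =>
    norm_quot τ hτ _ _ a q ha (hb a ha)
  have hrpos : 0 < |r| := abs_pos.2 hr
  set W := 1 / (2 * Real.pi * |r|) with hW
  have hWpos : 0 < W := by positivity
  have hk'n : ∀ a, S ≤ a → ‖k' a * w a‖ ≤ (M / v + ‖τ‖ / v ^ 2) * W / a ^ 2 := by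
    intro a haS
    have ha : 0 < a := hS.trans_le haS
    have hne := den_ne' τ hτ a q ha
    have e : k' a = h' a / (a * τ + q) - (h a / (a * τ + q)) * (τ / (a * τ + q)) := by
      simp only [hk']; field_simp
    rw [norm_mul, hwn, e]
    have h1 := norm_quot τ hτ _ _ a q ha (hb' a ha)
    have h2 := norm_quot τ hτ _ _ a q ha (hb a ha)
    have h3 := norm_quot τ hτ _ _ a q ha (le_refl ‖τ‖)
    calc _ ≤ (M / a / (a * v) + 1 / (a * v) * (‖τ‖ / (a * v))) * W := by
          gcongr
          refine (norm_sub_le _ _).trans ?_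
          rw [norm_mul]
          gcongr
      _ = _ := by field_simp
  rw [hJ, ibp]
  have h1 : ‖∫ a in S..T, k' a * w a‖ ≤ (M / v + ‖τ‖ / v ^ 2) * W / S :=
    int_inv_sq _ _ S T hS hST (by positivity) hk'n
  have h2 : ‖k T * w T‖ ≤ 1 / (S * v) * W := by
    rw [norm_mul, hwn]
    gcongr
    refine (hkn T hT).trans ?_
    gcongr
  have h3 : ‖k S * w S‖ ≤ 1 / (S * v) * W := by
    rw [norm_mul, hwn]
    gcongr
    exact hkn S hS
  have hWle : W ≤ 1 / |r| := by
    rw [hW]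
    apply one_div_le_one_div_of_le hrpos
    have := Real.pi_gt_three
    nlinarith
  calc _ ≤ 1 / (S * v) * W + 1 / (S * v) * W + (M / v + ‖τ‖ / v ^ 2) * W / S := by
        refine (norm_sub_le _ _).trans ?_
        refine add_le_add ((norm_sub_le _ _).trans (add_le_add h2 h3)) h1
    _ ≤ 1 / (S * v) * (1 / |r|) + 1 / (S * v) * (1 / |r|) + (M / v + ‖τ‖ / v ^ 2) * (1 / |r|) / S := by
        gcongr
    _ = _ := by field_simp; ring

def Df (τ : ℂ) (h : ℝ → ℂ) (r q a : ℝ) : ℂ := Jf τ h r q a - Jf τ h (-r) (-q) a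

lemma Df_pt (τ : ℂ) (hτ : 0 < τ.im) (h : ℝ → ℂ) (hb : ∀ a > 0, ‖h a‖ ≤ 1) (r q a : ℝ)
    (ha : 0 < a) :
    ‖Df τ h r q a‖ ≤ 4 * Real.pi * |r| / τ.im + 2 * KK τ ^ 2 * (|q| / (a + |q|) ^ 2) := by
  have hn1 := den_ne' τ hτ a q ha
  have hn2 := den_ne' τ hτ a (-q) ha
  have e : Df τ h r q a = h a * ((eC ((a * r : ℝ) : ℂ) - 1) / (a * τ + q)
      - (eC ((a * (-r) : ℝ) : ℂ) - 1) / (a * τ + (-q : ℝ))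
      + (-(2 * q)) / ((a * τ + q) * (a * τ + (-q : ℝ)))) := by
    unfold Df Jf
    have : (-(2 * q) : ℂ) / ((a * τ + q) * (a * τ + (-q : ℝ)))
      = 1 / (a * τ + q) - 1 / (a * τ + (-q : ℝ)) := by
      rw [div_sub_div _ _ hn1 hn2]; congr 1; push_cast; ring
    rw [this]; ring
  have h1 := norm_quot τ hτ _ _ a q ha (norm_eC_sub_one (a * r))
  have h2 := norm_quot τ hτ _ _ a (-q) ha (norm_eC_sub_one (a * (-r)))
  have l1 := den_low τ hτ a q ha.le
  have l2 := den_low τ hτ a (-q) ha.le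
  rw [abs_neg] at l2
  have hK := KK_pos τ hτ
  have h3 : ‖(-(2 * q) : ℂ) / ((a * τ + q) * (a * τ + (-q : ℝ)))‖
      ≤ 2 * KK τ ^ 2 * (|q| / (a + |q|) ^ 2) := by
    rw [norm_div, norm_mul]
    have hnum : ‖(-(2 * q) : ℂ)‖ = 2 * |q| := by simp
    have hp1 : 0 < ‖(a : ℂ) * τ + q‖ := norm_pos_iff.2 hn1
    have hp2 : 0 < ‖(a : ℂ) * τ + (-q : ℝ)‖ := norm_pos_iff.2 hn2
    have hs : 0 < a + |q| := by positivity
    have hm := mul_le_mul l1 l2 hs.le (by positivity)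
    rw [hnum, div_le_iff₀ (by positivity)]
    calc 2 * |q| = 2 * |q| * ((a + |q|) * (a + |q|)) / (a + |q|) ^ 2 := by field_simp
      _ ≤ 2 * |q| * (KK τ * ‖(a : ℂ) * τ + q‖ * (KK τ * ‖(a : ℂ) * τ + (-q : ℝ)‖)) / (a + |q|) ^ 2 := by
          gcongr
      _ = _ := by ring
  have e1 : 2 * Real.pi * |a * r| / (a * τ.im) = 2 * Real.pi * |r| / τ.im := by
    rw [abs_mul, abs_of_pos ha]; field_simp
  have e2 : 2 * Real.pi * |a * (-r)| / (a * τ.im) = 2 * Real.pi * |r| / τ.im := by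
    rw [abs_mul, abs_of_pos ha, abs_neg]; field_simp
  rw [e1] at h1
  rw [e2] at h2
  rw [e, norm_mul]
  refine (mul_le_of_le_one_left (norm_nonneg _) (hb a ha)).trans ?_
  refine (norm_add_le _ _).trans ?_
  refine (add_le_add (norm_sub_le _ _) le_rfl).trans ?_
  have : 4 * Real.pi * |r| / τ.im = 2 * Real.pi * |r| / τ.im + 2 * Real.pi * |r| / τ.im := by ring
  linarith

lemma head_bd (τ : ℂ) (hτ : 0 < τ.im) (h : ℝ → ℂ) (hb : ∀ a > 0, ‖h a‖ ≤ 1) (r q T : ℝ)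
    (hq : q ≠ 0) (hT : 0 ≤ T) :
    ‖∫ a in (0 : ℝ)..T, Df τ h r q a‖ ≤ 4 * Real.pi * |r| / τ.im * T + 2 * KK τ ^ 2 := by
  have hq' : 0 < |q| := abs_pos.2 hq
  have hpos : ∀ a ∈ uIcc 0 T, 0 < a + |q| := fun a ha => by
    rw [uIcc_of_le hT] at ha; have := ha.1; positivity
  have hc2 : IntervalIntegrable (fun a : ℝ => |q| / (a + |q|) ^ 2) volume 0 T := by
    apply ContinuousOn.intervalIntegrable
    apply ContinuousOn.div (by fun_prop) (by fun_prop)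
    intro a ha
    exact pow_ne_zero _ (hpos a ha).ne'
  have hi : ∫ a in (0 : ℝ)..T, |q| / (a + |q|) ^ 2 = -|q| / (T + |q|) - -|q| / (0 + |q|) := by
    apply integral_eq_sub_of_hasDerivAt (f := fun a : ℝ => -|q| / (a + |q|)) _ hc2
    intro a ha
    have h0 := (hpos a ha).ne'
    have := (((hasDerivAt_id a).add_const |q|).inv h0).const_mul (-|q|)
    convert! this using 1
    simp; field_simp
  have := norm_integral_le_of_norm_le hT (f := Df τ h r q)
    (g := fun a => 4 * Real.pi * |r| / τ.im + 2 * KK τ ^ 2 * (|q| / (a + |q|) ^ 2)) (μ := volume)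
    (ae_of_all _ fun a ha => Df_pt τ hτ h hb r q a ha.1)
    (intervalIntegrable_const.add (hc2.const_mul _))
  refine this.trans ?_
  rw [integral_add intervalIntegrable_const (hc2.const_mul _), intervalIntegral.integral_const_mul, hi,
    intervalIntegral.integral_const]
  have h1 : -|q| / (T + |q|) - -|q| / (0 + |q|) ≤ 1 := by
    have : 0 ≤ |q| / (T + |q|) := by positivity
    rw [zero_add, neg_div, neg_div, div_self hq'.ne']; linarith
  have h2 : 2 * KK τ ^ 2 * (-|q| / (T + |q|) - -|q| / (0 + |q|)) ≤ 2 * KK τ ^ 2 * 1 := by gcongr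
  simp only [smul_eq_mul]
  linarith

lemma main_lim (τ : ℂ) (hτ : 0 < τ.im) (h h' : ℝ → ℂ) (M : ℝ) (hM : 0 ≤ M)
    (hd : ∀ a, HasDerivAt h (h' a) a) (hc : Continuous h')
    (hb : ∀ a > 0, ‖h a‖ ≤ 1) (hb' : ∀ a > 0, ‖h' a‖ ≤ M / a) :
    ∃ C : ℝ, ∀ r q : ℝ, q ≠ 0 → (r ≠ 0 ∨ ∃ N : ℝ, 0 ≤ N ∧ ∀ a > 0, ‖h a‖ ≤ N / a) →
      ∃ L : ℂ, Tendsto (fun T : ℝ => ∫ a in (0 : ℝ)..T, Df τ h r q a) atTop (nhds L) ∧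
        ‖L‖ ≤ C := by
  have hch : Continuous h := continuous_iff_continuousAt.2 fun a => (hd a).continuousAt
  set A := 2 / τ.im + (M / τ.im + ‖τ‖ / τ.im ^ 2) with hA
  have hA0 : 0 ≤ A := by positivity
  refine ⟨4 * Real.pi / τ.im + 2 * KK τ ^ 2 + 2 * A, fun r q hq hor => ?_⟩
  have hcJ : ∀ r' q', q' ≠ 0 → ∀ S T, IntervalIntegrable (Jf τ h r' q') volume S T :=
    fun r' q' h0 S T => (cont_Jf τ hτ h hch r' q' h0).intervalIntegrable _ _
  have hq2 : -q ≠ 0 := neg_ne_zero.2 hq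
  have hD : ∀ S T, IntervalIntegrable (Df τ h r q) volume S T :=
    fun S T => (hcJ r q hq S T).sub (hcJ (-r) (-q) hq2 S T)
  have hsplit : ∀ S T, ∫ a in S..T, Df τ h r q a
      = (∫ a in S..T, Jf τ h r q a) - ∫ a in S..T, Jf τ h (-r) (-q) a :=
    fun S T => integral_sub (hcJ r q hq S T) (hcJ (-r) (-q) hq2 S T)
  have htail : r ≠ 0 → ∀ S T, 0 < S → S ≤ T → ‖∫ a in S..T, Df τ h r q a‖ ≤ 2 * A / |r| / S := by
    intro hr S T hS hST
    rw [hsplit]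
    have h1 := tail_bd τ hτ h h' M hM hd hc hb hb' r q S T hr hS hST
    have h2 := tail_bd τ hτ h h' M hM hd hc hb hb' (-r) (-q) S T (neg_ne_zero.2 hr) hS hST
    rw [abs_neg] at h2
    refine (norm_sub_le _ _).trans ((add_le_add h1 h2).trans (le_of_eq ?_))
    rw [div_div]; ring
  have hB : ∃ B, 0 ≤ B ∧ ∀ S T, 0 < S → S ≤ T → ‖∫ a in S..T, Df τ h r q a‖ ≤ B / S := by
    by_cases hr : r = 0
    · obtain ⟨N, hN, hN'⟩ := hor.resolve_left (fun h => h hr)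
      have hJ : ∀ r' q' S T, 0 < S → S ≤ T → ‖∫ a in S..T, Jf τ h r' q' a‖ ≤ N / τ.im / S := by
        intro r' q' S T hS hST
        apply int_inv_sq _ _ S T hS hST (by positivity)
        intro a haS
        have ha : 0 < a := hS.trans_le haS
        unfold Jf
        rw [norm_mul, norm_eC_real, one_mul]
        refine (norm_quot τ hτ _ _ a q' ha (hN' a ha)).trans (le_of_eq ?_)
        field_simp
      refine ⟨2 * (N / τ.im), by positivity, fun S T hS hST => ?_⟩
      rw [hsplit]
      refine (norm_sub_le _ _).trans ((add_le_add (hJ _ _ S T hS hST) (hJ _ _ S T hS hST)).trans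
        (le_of_eq ?_))
      ring
    · exact ⟨2 * A / |r|, by positivity, htail hr⟩
  obtain ⟨B, hB0, hB⟩ := hB
  have hcau : CauchySeq (fun T : ℝ => ∫ a in (0 : ℝ)..T, Df τ h r q a) := by
    rw [Metric.cauchySeq_iff']
    intro ε hε
    refine ⟨B / ε + 1, fun n hn => ?_⟩
    have hpos : 0 < B / ε + 1 := by positivity
    rw [dist_eq_norm, integral_interval_sub_left (hD _ _) (hD _ _)]
    refine (hB _ n hpos hn).trans_lt ?_
    rw [div_lt_iff₀ hpos]
    have : ε * (B / ε + 1) = B + ε := by field_simp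
    linarith
  obtain ⟨L, hL⟩ := cauchySeq_tendsto_of_complete hcau
  refine ⟨L, hL, ?_⟩
  refine le_of_tendsto hL.norm ?_
  filter_upwards [eventually_ge_atTop 0] with T hT
  by_cases hr : r = 0
  · have := head_bd τ hτ h hb r q T hq hT
    have hpp : 0 ≤ 4 * Real.pi / τ.im := by have := Real.pi_pos; positivity
    simp only [hr, abs_zero, mul_zero, zero_div, zero_mul, zero_add] at this ⊢
    linarith
  · have hr' : 0 < |r| := abs_pos.2 hr
    have hpp : 0 ≤ 4 * Real.pi / τ.im := by have := Real.pi_pos; positivity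
    have hhead : ∀ T, 0 ≤ T → T ≤ 1 / |r| →
        ‖∫ a in (0 : ℝ)..T, Df τ h r q a‖ ≤ 4 * Real.pi / τ.im + 2 * KK τ ^ 2 := by
      intro T hT hT2
      refine (head_bd τ hτ h hb r q T hq hT).trans ?_
      have : 4 * Real.pi * |r| / τ.im * T ≤ 4 * Real.pi * |r| / τ.im * (1 / |r|) := by
        gcongr
      have e : 4 * Real.pi * |r| / τ.im * (1 / |r|) = 4 * Real.pi / τ.im := by field_simp
      linarith
    rcases le_total T (1 / |r|) with hT2 | hT2
    · have := hhead T hT hT2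
      linarith
    · have hp : 0 < 1 / |r| := by positivity
      rw [← integral_add_adjacent_intervals (hD 0 (1 / |r|)) (hD _ T)]
      refine (norm_add_le _ _).trans (add_le_add (hhead _ hp.le le_rfl) ?_)
      refine (htail hr _ T hp hT2).trans (le_of_eq ?_)
      field_simp

lemma gauss_lim (τ : ℂ) (hτ : 0 < τ.im) :
    ∃ C : ℝ, ∀ r q : ℝ, q ≠ 0 →
      ∃ L : ℂ, Tendsto (fun T : ℝ => ∫ a in (0 : ℝ)..T,
        Df τ (fun a => eC ((a : ℂ) ^ 2 * τ)) r q a) atTop (nhds L) ∧ ‖L‖ ≤ C := by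
  have hpi := Real.pi_pos
  have hn : ∀ a : ℝ, ‖eC ((a : ℂ) ^ 2 * τ)‖ = Real.exp (-(2 * Real.pi * (a ^ 2 * τ.im))) := by
    intro a
    rw [norm_eC]
    congr 3
    rw [← Complex.ofReal_pow, Complex.im_ofReal_mul]
  have hexp : ∀ x : ℝ, x * Real.exp (-x) ≤ 1 := by
    intro x
    have h1 := Real.add_one_le_exp x
    rw [Real.exp_neg, ← div_eq_mul_inv, div_le_one (Real.exp_pos x)]
    linarith
  have hsq : ∀ a : ℝ, a ^ 2 * ‖eC ((a : ℂ) ^ 2 * τ)‖ ≤ 1 / (2 * Real.pi * τ.im) := by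
    intro a
    rw [hn, le_div_iff₀ (by positivity)]
    refine le_of_eq_of_le ?_ (hexp (2 * Real.pi * (a ^ 2 * τ.im)))
    ring
  have hle1 : ∀ a : ℝ, ‖eC ((a : ℂ) ^ 2 * τ)‖ ≤ 1 := by
    intro a
    rw [hn, Real.exp_le_one_iff]
    have : 0 ≤ 2 * Real.pi * (a ^ 2 * τ.im) := by positivity
    linarith
  obtain ⟨C, hC⟩ := main_lim τ hτ (fun a => eC ((a : ℂ) ^ 2 * τ))
    (fun a => eC ((a : ℂ) ^ 2 * τ) * (2 * Real.pi * Complex.I * (2 * a * τ)))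
    (2 * ‖τ‖ / τ.im) (by positivity)
    (by
      intro a
      have h0 : HasDerivAt (fun a : ℝ => (a : ℂ)) 1 a := Complex.ofRealCLM.hasDerivAt
      have h1 := ((h0.pow 2).mul_const τ).const_mul (2 * Real.pi * Complex.I)
      have h2 := h1.cexp
      convert! h2 using 1
      simp [eC])
    ((continuous_eC.comp (by fun_prop)).mul (by fun_prop))
    (fun a _ => hle1 a)
    (by
      intro a ha
      rw [norm_mul, le_div_iff₀ ha]
      have : ‖(2 * Real.pi * Complex.I * (2 * a * τ) : ℂ)‖ = 4 * Real.pi * a * ‖τ‖ := by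
        simp [abs_of_pos hpi, abs_of_pos ha]; ring
      rw [this]
      calc _ = 4 * Real.pi * ‖τ‖ * (a ^ 2 * ‖eC ((a : ℂ) ^ 2 * τ)‖) := by ring
        _ ≤ 4 * Real.pi * ‖τ‖ * (1 / (2 * Real.pi * τ.im)) := by gcongr; exact hsq a
        _ = _ := by field_simp; ring)
  refine ⟨C, fun r q hq => hC r q hq (Or.inr ⟨1 + 1 / (2 * Real.pi * τ.im), by positivity, ?_⟩)⟩
  intro a ha
  rw [le_div_iff₀ ha]
  have h1 := hsq a
  have h2 := hle1 a
  have h3 := norm_nonneg (eC ((a : ℂ) ^ 2 * τ))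
  nlinarith [mul_nonneg h3 (sq_nonneg (a - 1)), mul_nonneg h3 (sq_nonneg a)]

lemma one_lim (τ : ℂ) (hτ : 0 < τ.im) :
    ∃ C : ℝ, ∀ r q : ℝ, q ≠ 0 → r ≠ 0 →
      ∃ L : ℂ, Tendsto (fun T : ℝ => ∫ a in (0 : ℝ)..T,
        Df τ (fun _ => 1) r q a) atTop (nhds L) ∧ ‖L‖ ≤ C := by
  obtain ⟨C, hC⟩ := main_lim τ hτ (fun _ => 1) (fun _ => 0) 0 le_rfl
    (fun a => hasDerivAt_const a 1) continuous_const (by simp) (by simp)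
  exact ⟨C, fun r q hq hr => hC r q hq (Or.inl hr)⟩

/-- The inner integral for `a > 0`. -/
def Gf (τ : ℂ) (p q a : ℝ) : ℂ :=
  1 / (2 * Real.pi * Complex.I) *
    (2 * Jf τ (fun a => eC ((a : ℂ) ^ 2 * τ)) (p + q) q a - Jf τ (fun _ => 1) p q a)

lemma Gf_lim (τ : ℂ) (hτ : 0 < τ.im) :
    ∃ C : ℝ, ∀ p q : ℝ, q ≠ 0 → p ≠ 0 →
      ∃ L : ℂ, Tendsto (fun T : ℝ => ∫ a in (0 : ℝ)..T,
        (Gf τ p q a - Gf τ (-p) (-q) a)) atTop (nhds L) ∧ ‖L‖ ≤ C := by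
  obtain ⟨C1, h1⟩ := gauss_lim τ hτ
  obtain ⟨C2, h2⟩ := one_lim τ hτ
  refine ⟨‖(1 / (2 * Real.pi * Complex.I) : ℂ)‖ * (2 * C1 + C2), fun p q hq hp => ?_⟩
  obtain ⟨L1, t1, b1⟩ := h1 (p + q) q hq
  obtain ⟨L2, t2, b2⟩ := h2 p q hq hp
  refine ⟨1 / (2 * Real.pi * Complex.I) * (2 * L1 - L2), ?_, ?_⟩
  · refine (((t1.const_mul 2).sub t2).const_mul (1 / (2 * Real.pi * Complex.I))).congr ?_
    intro T
    have hq2 : -q ≠ 0 := neg_ne_zero.2 hq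
    have hg : Continuous (fun a : ℝ => eC ((a : ℂ) ^ 2 * τ)) := continuous_eC.comp (by fun_prop)
    have c1 : IntervalIntegrable (Df τ (fun a => eC ((a : ℂ) ^ 2 * τ)) (p + q) q) volume 0 T :=
      ((cont_Jf τ hτ _ hg (p + q) q hq).sub (cont_Jf τ hτ _ hg (-(p + q)) (-q) hq2)).intervalIntegrable _ _
    have c2 : IntervalIntegrable (Df τ (fun _ => 1) p q) volume 0 T :=
      ((cont_Jf τ hτ _ continuous_const p q hq).sub
        (cont_Jf τ hτ _ continuous_const (-p) (-q) hq2)).intervalIntegrable _ _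
    rw [← intervalIntegral.integral_const_mul, ← integral_sub (c1.const_mul 2) c2,
      ← intervalIntegral.integral_const_mul]
    congr 1
    ext a
    unfold Gf Df
    rw [show -(p + q) = -p + -q by ring]
    ring
  · rw [norm_mul]
    gcongr
    refine (norm_sub_le _ _).trans ?_
    rw [norm_mul]
    simp only [Complex.norm_ofNat]
    linarith

def pf (x y : ℝ) : ℝ := (y - x) / Real.sqrt 2
def qf (x y : ℝ) : ℝ := (x + y) / Real.sqrt 2

lemma ft_eq (τ : ℂ) (x y a b : ℝ) :
    ftPlusIntegrand τ x y a b = (Real.sign (a - b) : ℂ) * (if 0 < a * b then 1 else 0) *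
      (eC ((a * pf x y : ℝ) : ℂ) *
        Complex.exp (2 * Real.pi * Complex.I * (a * τ + (qf x y : ℝ)) * b)) := by
  have hs0 : 0 < Real.sqrt 2 := by positivity
  have hs : Real.sqrt 2 ^ 2 = 2 := Real.sq_sqrt (by norm_num)
  have hsc : ((Real.sqrt 2 : ℝ) : ℂ) ^ 2 = 2 := by exact_mod_cast hs
  unfold ftPlusIntegrand phiPlus
  have e1 : Real.sign ((a - b) / Real.sqrt 2) = Real.sign (a - b) := by
    rcases lt_trichotomy (a - b) 0 with h | h | h
    · rw [Real.sign_of_neg h, Real.sign_of_neg (div_neg_of_neg_of_pos h hs0)]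
    · rw [h, zero_div]
    · rw [Real.sign_of_pos h, Real.sign_of_pos (div_pos h hs0)]
  have e2 : (((a - b) / Real.sqrt 2) ^ 2 < ((a + b) / Real.sqrt 2) ^ 2) ↔ 0 < a * b := by
    rw [div_pow, div_pow, hs]
    constructor <;> intro h <;> nlinarith
  have e3 : ((((((a + b) / Real.sqrt 2 : ℝ) : ℂ)) ^ 2 - ((((a - b) / Real.sqrt 2 : ℝ) : ℂ)) ^ 2) / 2) * τ
      = a * b * τ := by
    push_cast
    rw [div_pow, div_pow, hsc]; ring
  have e4 : (-(((a - b) / Real.sqrt 2) * x) + ((a + b) / Real.sqrt 2) * y : ℝ)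
      = a * pf x y + b * qf x y := by
    unfold pf qf; ring
  rw [e1, e3, e4]
  simp only [e2]
  have e5 : eC (a * b * τ) * eC ((a * pf x y + b * qf x y : ℝ) : ℂ) = (eC ((a * pf x y : ℝ) : ℂ) *
        Complex.exp (2 * Real.pi * Complex.I * (a * τ + (qf x y : ℝ)) * b)) := by
    unfold eC
    rw [← Complex.exp_add, ← Complex.exp_add]
    congr 1
    push_cast
    ring
  rw [← e5]
  ring

lemma ft_neg (τ : ℂ) (x y a b : ℝ) :
    ftPlusIntegrand τ x y (-a) (-b) = - ftPlusIntegrand τ (-x) (-y) a b := by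
  rw [ft_eq, ft_eq]
  have e1 : Real.sign (-a - -b) = - Real.sign (a - b) := by
    rw [← Real.sign_neg]; congr 1; ring
  have e2 : pf (-x) (-y) = - pf x y := by unfold pf; ring
  have e3 : qf (-x) (-y) = - qf x y := by unfold qf; ring
  rw [e1, e2, e3, neg_mul_neg, neg_mul_comm]
  have : 2 * (Real.pi : ℂ) * Complex.I * (((-a : ℝ) : ℂ) * τ + (qf x y : ℝ)) * ((-b : ℝ) : ℂ)
    = 2 * (Real.pi : ℂ) * Complex.I * ((a : ℂ) * τ + ((-qf x y : ℝ) : ℂ)) * (b : ℂ) := by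
    push_cast; ring
  rw [this]
  push_cast
  ring

lemma inner_pos (τ : ℂ) (hτ : 0 < τ.im) (x y a : ℝ) (ha : 0 < a) :
    Tendsto (fun T : ℝ => ∫ b in (-T)..T, ftPlusIntegrand τ x y a b) atTop
      (nhds (Gf τ (pf x y) (qf x y) a)) := by
  set p := pf x y with hp
  set q := qf x y with hq
  have hne := den_ne' τ hτ a q ha
  set s : ℂ := 2 * Real.pi * Complex.I * (a * τ + (q : ℝ)) with hs
  set w : ℂ := eC ((a * p : ℝ) : ℂ) with hw
  have hs0 : s ≠ 0 := by
    rw [hs]; exact mul_ne_zero (by simp [Real.pi_ne_zero]) hne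
  have hsre : s.re < 0 := by
    have : s.re = - (2 * Real.pi * (a * τ.im)) := by
      rw [hs]; simp
    rw [this]
    have := Real.pi_pos
    have : 0 < 2 * Real.pi * (a * τ.im) := by positivity
    linarith
  have hE : Continuous (fun b : ℝ => w * Complex.exp (s * b)) := by fun_prop
  have hEi : ∀ S T, IntervalIntegrable (fun b : ℝ => w * Complex.exp (s * b)) volume S T :=
    fun S T => hE.intervalIntegrable _ _
  have hval : ∀ T, a < T → ∫ b in (-T)..T, ftPlusIntegrand τ x y a b
      = w * ((Complex.exp (s * a) - 1) / s) - w * ((Complex.exp (s * T) - Complex.exp (s * a)) / s) := by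
    intro T hT
    have hT0 : 0 < T := ha.trans hT
    have q1 : EqOn (fun _ => (0 : ℂ)) (ftPlusIntegrand τ x y a) (uIoo (-T) 0) := by
      intro b hb
      rw [uIoo_of_le (by linarith)] at hb
      have : ¬ 0 < a * b := by nlinarith [hb.2]
      simp [ft_eq, this]
    have q2 : EqOn (fun b : ℝ => w * Complex.exp (s * b)) (ftPlusIntegrand τ x y a) (uIoo 0 a) := by
      intro b hb
      rw [uIoo_of_le ha.le] at hb
      have h1 : 0 < a * b := mul_pos ha hb.1
      have h2 : Real.sign (a - b) = 1 := Real.sign_of_pos (by linarith [hb.2])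
      simp only [ft_eq, h1, h2, if_true, ← hp, ← hq, ← hs, ← hw]
      simp
    have q3 : EqOn (fun b : ℝ => -(w * Complex.exp (s * b))) (ftPlusIntegrand τ x y a) (uIoo a T) := by
      intro b hb
      rw [uIoo_of_le hT.le] at hb
      have h1 : 0 < a * b := mul_pos ha (ha.trans hb.1)
      have h2 : Real.sign (a - b) = -1 := Real.sign_of_neg (by linarith [hb.1])
      simp only [ft_eq, h1, h2, if_true, ← hp, ← hq, ← hs, ← hw]
      simp
    have i1 : IntervalIntegrable (ftPlusIntegrand τ x y a) volume (-T) 0 :=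
      IntervalIntegrable.congr_uIoo intervalIntegrable_const q1
    have i2 := IntervalIntegrable.congr_uIoo ((hEi 0 a)) q2
    have i3 := IntervalIntegrable.congr_uIoo ((hEi a T).neg) q3
    rw [← integral_add_adjacent_intervals (i1.trans i2) i3, ← integral_add_adjacent_intervals i1 i2,
      ← integral_congr_uIoo q1, ← integral_congr_uIoo q2, ← integral_congr_uIoo q3,
      intervalIntegral.integral_neg, intervalIntegral.integral_const_mul,
      intervalIntegral.integral_const_mul, integral_exp_mul_complex hs0, integral_exp_mul_complex hs0]
    simp
    ring
  have hlim0 : Tendsto (fun T : ℝ => Complex.exp (s * T)) atTop (nhds 0) := by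
    rw [tendsto_zero_iff_norm_tendsto_zero]
    have : ∀ T : ℝ, ‖Complex.exp (s * T)‖ = Real.exp (s.re * T) := by
      intro T; rw [Complex.norm_exp]; simp
    simp only [this]
    exact Real.tendsto_exp_atBot.comp (tendsto_id.const_mul_atTop_of_neg hsre)
  have hlim : Tendsto (fun T : ℝ => w * ((Complex.exp (s * a) - 1) / s)
      - w * ((Complex.exp (s * T) - Complex.exp (s * a)) / s)) atTop
      (nhds (w * ((Complex.exp (s * a) - 1) / s) - w * ((0 - Complex.exp (s * a)) / s))) :=
    (((hlim0.sub_const _).div_const s).const_mul w).const_sub _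
  have hG : Gf τ p q a = w * ((Complex.exp (s * a) - 1) / s) - w * ((0 - Complex.exp (s * a)) / s) := by
    unfold Gf Jf
    have : eC ((a * (p + q) : ℝ) : ℂ) * eC ((a : ℂ) ^ 2 * τ) = w * Complex.exp (s * a) := by
      rw [hw, hs]; unfold eC
      rw [← Complex.exp_add, ← Complex.exp_add]
      congr 1; push_cast; ring
    rw [← mul_div_assoc, this, ← hw, hs]
    field_simp
    ring
  rw [hG]
  refine hlim.congr' ?_
  filter_upwards [eventually_gt_atTop a] with T hT
  exact (hval T hT).symm

def gf (τ : ℂ) (x y a : ℝ) : ℂ :=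
  if 0 < a then Gf τ (pf x y) (qf x y) a
  else if a < 0 then - Gf τ (-pf x y) (-qf x y) (-a) else 0

lemma inner_lim (τ : ℂ) (hτ : 0 < τ.im) (x y a : ℝ) :
    Tendsto (fun T : ℝ => ∫ b in (-T)..T, ftPlusIntegrand τ x y a b) atTop
      (nhds (gf τ x y a)) := by
  unfold gf
  rcases lt_trichotomy a 0 with h | h | h
  · rw [if_neg h.not_gt, if_pos h]
    have := (inner_pos τ hτ (-x) (-y) (-a) (by linarith)).neg
    have e2 : pf (-x) (-y) = - pf x y := by unfold pf; ring
    have e3 : qf (-x) (-y) = - qf x y := by unfold qf; ring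
    rw [e2, e3] at this
    refine this.congr fun T => ?_
    rw [← intervalIntegral.integral_neg]
    simp only [← ft_neg]
    rw [neg_neg, intervalIntegral.integral_comp_neg (fun b => ftPlusIntegrand τ x y a b), neg_neg]
  · subst h
    simp [ft_eq]
  · rw [if_pos h]
    exact inner_pos τ hτ x y a h

lemma cont_Gf (τ : ℂ) (hτ : 0 < τ.im) (p q : ℝ) (hq : q ≠ 0) : Continuous (Gf τ p q) := by
  unfold Gf
  have h1 := cont_Jf τ hτ (fun a => eC ((a : ℂ) ^ 2 * τ)) (continuous_eC.comp (by fun_prop)) (p + q) q hq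
  have h2 := cont_Jf τ hτ (fun _ => 1) continuous_const p q hq
  fun_prop

lemma outer_eq (τ : ℂ) (hτ : 0 < τ.im) (x y T : ℝ) (hq : qf x y ≠ 0) (hT : 0 ≤ T) :
    ∫ a in (-T)..T, gf τ x y a =
      ∫ a in (0 : ℝ)..T, (Gf τ (pf x y) (qf x y) a - Gf τ (-pf x y) (-qf x y) a) := by
  have c1 := cont_Gf τ hτ (pf x y) (qf x y) hq
  have c2 := cont_Gf τ hτ (-pf x y) (-qf x y) (neg_ne_zero.2 hq)
  have q1 : EqOn (fun a => - Gf τ (-pf x y) (-qf x y) (-a)) (gf τ x y) (uIoo (-T) 0) := by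
    intro a ha
    rw [uIoo_of_le (by linarith)] at ha
    simp only [gf, if_neg ha.2.not_gt, if_pos ha.2]
  have q2 : EqOn (Gf τ (pf x y) (qf x y)) (gf τ x y) (uIoo 0 T) := by
    intro a ha
    rw [uIoo_of_le hT] at ha
    simp only [gf, if_pos ha.1]
  have c2' : Continuous (fun a => - Gf τ (-pf x y) (-qf x y) (-a)) := by fun_prop
  have i1 := IntervalIntegrable.congr_uIoo ((c2'.intervalIntegrable (μ := volume) _ _)) q1
  have i2 := IntervalIntegrable.congr_uIoo ((c1.intervalIntegrable (μ := volume) _ _)) q2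
  rw [← integral_add_adjacent_intervals i1 i2, ← integral_congr_uIoo q1, ← integral_congr_uIoo q2,
    integral_sub (c1.intervalIntegrable _ _) (c2.intervalIntegrable _ _),
    intervalIntegral.integral_neg,
    intervalIntegral.integral_comp_neg (fun a => Gf τ (-pf x y) (-qf x y) a), neg_neg, neg_zero]
  ring

/-- the regularized Fourier transform of `φ⁺_τ` exists (as an iterated
improper integral) on `{x² ≠ y²}` and is bounded there. -/
theorem stmt3 (τ : ℂ) (hτ : 0 < τ.im) :
    ∃ (F : ℝ → ℝ → ℂ) (g : ℝ → ℝ → ℝ → ℂ) (C : ℝ),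
      ∀ x y : ℝ, x ^ 2 ≠ y ^ 2 →
        (∀ a : ℝ, Tendsto (fun T : ℝ => ∫ b in (-T)..T, ftPlusIntegrand τ x y a b)
          atTop (nhds (g x y a))) ∧
        Tendsto (fun T' : ℝ => ∫ a in (-T')..T', g x y a) atTop (nhds (F x y)) ∧
        ‖F x y‖ ≤ C := by
  obtain ⟨C, hC⟩ := Gf_lim τ hτ
  have key : ∀ x y : ℝ, ∃ L : ℂ, x ^ 2 ≠ y ^ 2 →
      Tendsto (fun T' : ℝ => ∫ a in (-T')..T', gf τ x y a) atTop (nhds L) ∧ ‖L‖ ≤ C := by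
    intro x y
    by_cases hxy : x ^ 2 = y ^ 2
    · exact ⟨0, fun h => absurd hxy h⟩
    have hs : Real.sqrt 2 ≠ 0 := by positivity
    have hp : pf x y ≠ 0 := by
      unfold pf
      refine div_ne_zero (fun h => hxy ?_) hs
      rw [sub_eq_zero.1 h]
    have hq : qf x y ≠ 0 := by
      unfold qf
      refine div_ne_zero (fun h => hxy ?_) hs
      rw [eq_neg_of_add_eq_zero_left h]; ring
    obtain ⟨L, hL, hb⟩ := hC (pf x y) (qf x y) hq hp
    refine ⟨L, fun _ => ⟨hL.congr' ?_, hb⟩⟩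
    filter_upwards [eventually_ge_atTop 0] with T hT
    exact (outer_eq τ hτ x y T hq hT).symm
  choose F hF using key
  exact ⟨F, gf τ, C, fun x y h => ⟨fun a => inner_lim τ hτ x y a, (hF x y h).1, (hF x y h).2⟩⟩


end
end
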